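/- Let A ∈ ℝ^{2n×2k} be such that all leading principal minors of even dimension of P_{2k} A^T J_{2n} A P_{2k}^T are nonzero, i.e., det((P_{2k} A^T J_{2n} A P_{2k}^T)_{1:2j,1:2j}) ≠ 0 for j = 1, …, k. Then there exist a unique S ∈ Sp(2k,2n) and a unique R ∈ T^0_{2k}(P_{2k}) such that A = S R. -/

import Mathlib

/-!
Conjugating by the perfect shuffle turns `J_{2k}` into the block diagonal matrix `hatJ k` with
`2 × 2` blocks `[[0, 1], [-1, 0]]`. If `A = S R` with `S` symplectic and `R = Pᵀ R̂ P`, then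
`M = P Aᵀ J A Pᵀ` equals `R̂ᵀ (hatJ k) R̂`, a Cholesky-like factorization of a skew-symmetric
matrix. Conversely such a factorization gives back `S = A R⁻¹`, since `R` is invertible as soon as
`det M ≠ 0`. So the theorem reduces to `existsUnique_skew_cholesky`: a skew-symmetric matrix whose
even leading principal minors do not vanish has exactly one factorization of this kind.

That lemma is proved by induction on `k`. Write `Ĵ` for `hatJ k`.
With `R̂ = [[R', Y], [0, D]]` and `M = [[M', B], [-Bᵀ, C]]`
the equation becomes `R'ᵀ Ĵ R' = M'`, `R'ᵀ Ĵ Y = B` and `Yᵀ Ĵ Y + Dᵀ J₂ D = C`. The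
first determines `R'` by induction, the second determines `Y`, and the last says
`d₀ d₁ = c` for `D = diag(d₀, d₁)`, with `c` the upper right entry of the Schur complement. This has
exactly one solution with `d₀ > 0`, `|d₁| = d₀`, provided `c ≠ 0`. If `c` were `0`, then `M` would
factor through a matrix with `D = 0`, contradicting `det M ≠ 0`.
-/

open Matrix

noncomputable section

/-- The Poisson matrix `J_{2m} = [[0, I_m], [-I_m, 0]]`. -/
def PoissonJ (m : ℕ) : Matrix (Fin (2 * m)) (Fin (2 * m)) ℝ :=
  Matrix.of fun i j =>
    if (j : ℕ) = (i : ℕ) + m then (1 : ℝ)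
    else if (i : ℕ) = (j : ℕ) + m then -1 else 0

/-- The symplectic Stiefel manifold `Sp(2k, 2n)`. -/
def SpStiefel (k n : ℕ) : Set (Matrix (Fin (2 * n)) (Fin (2 * k)) ℝ) :=
  {X | Xᵀ * PoissonJ n * X = PoissonJ k}

/-- Index map of the perfect shuffle permutation: column `j` of `P_{2k}`
is the standard basis vector `e_{shuffleIdx k j}`. -/
def shuffleIdx (k : ℕ) (j : Fin (2 * k)) : Fin (2 * k) :=
  if h : (j : ℕ) < k then ⟨2 * (j : ℕ), by omega⟩
  else ⟨2 * ((j : ℕ) - k) + 1, by have hj := j.isLt; omega⟩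

/-- The perfect shuffle permutation matrix `P_{2k} = [e_1, e_3, …, e_{2k-1}, e_2, …, e_{2k}]`. -/
def shuffleP (k : ℕ) : Matrix (Fin (2 * k)) (Fin (2 * k)) ℝ :=
  Matrix.of fun i j => if i = shuffleIdx k j then 1 else 0

/-- The set `T_{2k}(P_{2k})` of perfect-shuffle congruences of upper triangular matrices. -/
def Tset (k : ℕ) : Set (Matrix (Fin (2 * k)) (Fin (2 * k)) ℝ) :=
  {R | ∃ Rhat : Matrix (Fin (2 * k)) (Fin (2 * k)) ℝ,
      (∀ i j : Fin (2 * k), (j : ℕ) < (i : ℕ) → Rhat i j = 0) ∧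
      R = (shuffleP k)ᵀ * Rhat * shuffleP k}

/-- The `j × j` leading principal submatrix of a square matrix. -/
def leadSub {m : ℕ} (M : Matrix (Fin m) (Fin m) ℝ) (j : ℕ) (h : j ≤ m) :
    Matrix (Fin j) (Fin j) ℝ :=
  M.submatrix (Fin.castLE h) (Fin.castLE h)

/-- The index `2j-1` (1-indexed), i.e. `2j` (0-indexed), of the `j`-th `2×2` diagonal block. -/
def idxA {k : ℕ} (j : Fin k) : Fin (2 * k) := ⟨2 * (j : ℕ), by have := j.isLt; omega⟩

/-- The index `2j` (1-indexed), i.e. `2j+1` (0-indexed), of the `j`-th `2×2` diagonal block. -/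
def idxB {k : ℕ} (j : Fin k) : Fin (2 * k) := ⟨2 * (j : ℕ) + 1, by have := j.isLt; omega⟩

/-- The set `T⁰_{2k}(P_{2k})`: congruences `P_{2k}ᵀ R̂ P_{2k}` of upper triangular `R̂ = [r_{ij}]`
with `r_{2j-1,2j} = 0`, `r_{2j-1,2j-1} > 0` and `|r_{2j,2j}| = r_{2j-1,2j-1}` for `j = 1, …, k`. -/
def Tset0 (k : ℕ) : Set (Matrix (Fin (2 * k)) (Fin (2 * k)) ℝ) :=
  {R | ∃ Rhat : Matrix (Fin (2 * k)) (Fin (2 * k)) ℝ,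
      (∀ i j : Fin (2 * k), (j : ℕ) < (i : ℕ) → Rhat i j = 0) ∧
      (∀ j : Fin k,
        Rhat (idxA j) (idxB j) = 0 ∧
        0 < Rhat (idxA j) (idxA j) ∧
        |Rhat (idxB j) (idxB j)| = Rhat (idxA j) (idxA j)) ∧
      R = (shuffleP k)ᵀ * Rhat * shuffleP k}

/-! ### The shuffled Poisson matrix and the admissible factors -/

/-- The entries of `hatJ k`, as a function of two natural numbers, independently of `k`. -/
def hatEntry (i j : ℕ) : ℝ :=
  if i % 2 = 0 ∧ j = i + 1 then 1 else if j % 2 = 0 ∧ i = j + 1 then -1 else 0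

/-- The shuffled Poisson matrix: block diagonal with `k` blocks `[[0, 1], [-1, 0]]`. -/
def hatJ (k : ℕ) : Matrix (Fin (2 * k)) (Fin (2 * k)) ℝ :=
  Matrix.of fun i j => hatEntry i j

/-- The admissible factors `R̂`: upper triangular with `j`-th diagonal block `diag(r, ±r)`,
`r > 0`. -/
def IsHatT0 (k : ℕ) (R : Matrix (Fin (2 * k)) (Fin (2 * k)) ℝ) : Prop :=
  (∀ i j : Fin (2 * k), (j : ℕ) < (i : ℕ) → R i j = 0) ∧
    ∀ j : Fin k, R (idxA j) (idxB j) = 0 ∧ 0 < R (idxA j) (idxA j) ∧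
      |R (idxB j) (idxB j)| = R (idxA j) (idxA j)

/-- The splitting of the indices into those of the first `k` blocks and those of the last one. -/
def lastBlockEquiv (k : ℕ) : Fin (2 * k) ⊕ Fin 2 ≃ Fin (2 * (k + 1)) :=
  finSumFinEquiv

lemma lastBlockEquiv_inl (k : ℕ) (i : Fin (2 * k)) :
    ((lastBlockEquiv k (Sum.inl i) : Fin (2 * (k + 1))) : ℕ) = i := rfl

lemma lastBlockEquiv_inr (k : ℕ) (i : Fin 2) :
    ((lastBlockEquiv k (Sum.inr i) : Fin (2 * (k + 1))) : ℕ) = 2 * k + i := rfl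

/-- The standard `2 × 2` symplectic matrix. -/
def J₂ : Matrix (Fin 2) (Fin 2) ℝ := !![0, 1; -1, 0]

lemma hatJ_succ (k : ℕ) :
    (hatJ (k + 1)).submatrix (lastBlockEquiv k) (lastBlockEquiv k) =
      fromBlocks (hatJ k) 0 0 J₂ := by
  ext (i | i) (j | j)
  · rfl
  · have hi := i.isLt
    change hatEntry i (2 * k + j) = 0
    rw [hatEntry, if_neg (by omega), if_neg (by omega)]
  · have hj := j.isLt
    change hatEntry (2 * k + i) j = 0
    rw [hatEntry, if_neg (by omega), if_neg (by omega)]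
  · change hatEntry (2 * k + i) (2 * k + j) = J₂ i j
    fin_cases i <;> fin_cases j <;> simp [J₂, hatEntry]

lemma hatJ_transpose (k : ℕ) : (hatJ k)ᵀ = -hatJ k := by
  ext i j
  simp only [hatJ, hatEntry, transpose_apply, Matrix.neg_apply, of_apply]
  split_ifs <;> first | omega | simp

/-- Admissibility of `[[R, Y], [Z, D]]` in terms of its blocks; `Y` is unconstrained. -/
lemma isHatT0_succ (k : ℕ) (R : Matrix (Fin (2 * k)) (Fin (2 * k)) ℝ)
    (Y : Matrix (Fin (2 * k)) (Fin 2) ℝ) (Z : Matrix (Fin 2) (Fin (2 * k)) ℝ)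
    (D : Matrix (Fin 2) (Fin 2) ℝ) :
    IsHatT0 (k + 1) ((fromBlocks R Y Z D).submatrix (lastBlockEquiv k).symm
        (lastBlockEquiv k).symm) ↔
      IsHatT0 k R ∧ Z = 0 ∧ D 1 0 = 0 ∧ D 0 1 = 0 ∧ 0 < D 0 0 ∧ |D 1 1| = D 0 0 := by
  set e := lastBlockEquiv k with he
  have hA : ∀ j : Fin k, e.symm (idxA j.castSucc) = Sum.inl (idxA j) := fun j => by
    rw [Equiv.symm_apply_eq]; rfl
  have hB : ∀ j : Fin k, e.symm (idxB j.castSucc) = Sum.inl (idxB j) := fun j => by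
    rw [Equiv.symm_apply_eq]; rfl
  have hA' : e.symm (idxA (Fin.last k)) = Sum.inr 0 := by
    rw [Equiv.symm_apply_eq]; rfl
  have hB' : e.symm (idxB (Fin.last k)) = Sum.inr 1 := by
    rw [Equiv.symm_apply_eq]; rfl
  constructor
  · rintro ⟨hup, hd⟩
    have hup' : ∀ x y, (e y : ℕ) < (e x : ℕ) → fromBlocks R Y Z D x y = 0 := fun x y hxy => by
      simpa using hup (e x) (e y) hxy
    refine ⟨⟨fun i j hij => hup' (Sum.inl i) (Sum.inl j) hij, fun j => ?_⟩, ?_,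
      hup' (Sum.inr 1) (Sum.inr 0) ?_, ?_⟩
    · simpa [hA, hB] using hd j.castSucc
    · ext i j
      refine hup' (Sum.inr i) (Sum.inl j) ?_
      rw [he, lastBlockEquiv_inl, lastBlockEquiv_inr]
      omega
    · rw [he, lastBlockEquiv_inr, lastBlockEquiv_inr]
      simp
    · simpa [hA', hB'] using hd (Fin.last k)
  · rintro ⟨⟨hup, hd⟩, rfl, h10, hd'⟩
    refine ⟨fun i j hij => ?_, fun j => ?_⟩
    · obtain ⟨x, rfl⟩ := e.surjective i
      obtain ⟨y, rfl⟩ := e.surjective j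
      simp only [submatrix_apply, Equiv.symm_apply_apply]
      rcases x with x | x <;> rcases y with y | y
      · exact hup x y hij
      · rw [he, lastBlockEquiv_inl, lastBlockEquiv_inr] at hij
        omega
      · rfl
      · rw [he, lastBlockEquiv_inr, lastBlockEquiv_inr] at hij
        fin_cases x <;> fin_cases y <;> simp_all
    · induction j using Fin.lastCases with
      | last => simpa [hA', hB'] using hd'
      | cast j => simpa [hA, hB] using hd j

/-! ### The skew-symmetric Cholesky factorization -/

/-- A nonzero real `c` is uniquely a product `a b` with `a > 0` and `|b| = a`. -/
lemma existsUnique_diag (c : ℝ) (hc : c ≠ 0) :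
    ∃ a b : ℝ, (0 < a ∧ |b| = a ∧ a * b = c) ∧
      ∀ a' b' : ℝ, 0 < a' → |b'| = a' → a' * b' = c → a' = a ∧ b' = b := by
  have hs : 0 < √|c| := Real.sqrt_pos.2 (abs_pos.2 hc)
  have hss : √|c| * √|c| = |c| := Real.mul_self_sqrt (abs_nonneg c)
  refine ⟨√|c|, c / √|c|, ⟨hs, ?_, by field_simp⟩, fun a' b' ha hb hab => ?_⟩
  · rw [abs_div, abs_of_pos hs, div_eq_iff hs.ne', hss]
  · have h : a' = √|c| := by
      rw [← hab, abs_mul, hb, abs_of_pos ha, Real.sqrt_mul_self ha.le]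
    refine ⟨h, ?_⟩
    rw [← h, eq_div_iff ha.ne', mul_comm, hab]

lemma skew_two (C : Matrix (Fin 2) (Fin 2) ℝ) (h : Cᵀ = -C) : C = C 0 1 • J₂ := by
  have h00 := congrFun (congrFun h 0) 0
  have h01 := congrFun (congrFun h 0) 1
  have h11 := congrFun (congrFun h 1) 1
  simp only [transpose_apply, Matrix.neg_apply] at h00 h01 h11
  ext i j
  fin_cases i <;> fin_cases j <;> simp [J₂] <;> linarith

lemma diag_congr_J₂ (D : Matrix (Fin 2) (Fin 2) ℝ) (h10 : D 1 0 = 0) (h01 : D 0 1 = 0) :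
    Dᵀ * J₂ * D = (D 0 0 * D 1 1) • J₂ := by
  ext i j
  fin_cases i <;> fin_cases j <;>
    simp [J₂, Matrix.mul_apply, Fin.sum_univ_two, h10, h01, mul_comm]

lemma fromBlocks_congr {k : ℕ} (R K : Matrix (Fin (2 * k)) (Fin (2 * k)) ℝ)
    (Y : Matrix (Fin (2 * k)) (Fin 2) ℝ) (D L : Matrix (Fin 2) (Fin 2) ℝ) :
    (fromBlocks R Y 0 D)ᵀ * fromBlocks K 0 0 L * fromBlocks R Y 0 D =
      fromBlocks (Rᵀ * K * R) (Rᵀ * K * Y) (Yᵀ * K * R) (Yᵀ * K * Y + Dᵀ * L * D) := by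
  simp [fromBlocks_transpose, fromBlocks_multiply]

/-- The skew-symmetric analogue of the Cholesky factorization. The case `j = 0` of `hminors` holds
trivially; including it lets the induction treat the empty leading block like the others. -/
lemma existsUnique_skew_cholesky (k : ℕ) (M : Matrix (Fin (2 * k)) (Fin (2 * k)) ℝ)
    (hskew : Mᵀ = -M)
    (hminors : ∀ (j : ℕ) (hj : 2 * j ≤ 2 * k), (leadSub M (2 * j) hj).det ≠ 0) :
    ∃! R, IsHatT0 k R ∧ Rᵀ * hatJ k * R = M := by
  induction k with
  | zero =>
    refine ⟨0, ⟨⟨fun i => i.elim0, fun i => i.elim0⟩, ?_⟩, fun R _ => ?_⟩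
    · ext i; exact i.elim0
    · ext i; exact i.elim0
  | succ k ih =>
    set e := lastBlockEquiv k with he
    have hdetM : (M.submatrix e e).det ≠ 0 := by
      rw [det_submatrix_equiv_self]
      exact hminors (k + 1) le_rfl
    have hskew' : (M.submatrix e e)ᵀ = -(M.submatrix e e) := by
      rw [transpose_submatrix, hskew]; rfl
    have hdet' : (M.submatrix e e).toBlocks₁₁.det ≠ 0 := hminors k (by omega)
    have hmin' : ∀ (j : ℕ) (hj : 2 * j ≤ 2 * k),
        (leadSub (M.submatrix e e).toBlocks₁₁ (2 * j) hj).det ≠ 0 :=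
      fun j hj => hminors j (by omega)
    -- The equation is transported to matrices in block form.
    have heq : ∀ N : Matrix (Fin (2 * k) ⊕ Fin 2) (Fin (2 * k) ⊕ Fin 2) ℝ,
        (N.submatrix e.symm e.symm)ᵀ * hatJ (k + 1) * N.submatrix e.symm e.symm = M ↔
          Nᵀ * fromBlocks (hatJ k) 0 0 J₂ * N = M.submatrix e e := by
      intro N
      rw [← hatJ_succ, ← he]
      constructor
      · intro h
        rw [← h, ← submatrix_mul_equiv _ _ _ e, ← submatrix_mul_equiv _ _ _ e]
        simp [transpose_submatrix]
      · intro h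
        have h2 := congrArg (fun Q => Q.submatrix e.symm e.symm) h
        simp only [← submatrix_mul_equiv _ _ _ e.symm] at h2
        simpa [transpose_submatrix] using h2
    generalize M.submatrix e e = Q at *
    obtain ⟨M', B, B', C, rfl⟩ : ∃ M' B B' C, Q = fromBlocks M' B B' C :=
      ⟨_, _, _, _, (fromBlocks_toBlocks Q).symm⟩
    simp only [toBlocks_fromBlocks₁₁] at hdet' hmin'
    rw [fromBlocks_transpose, fromBlocks_neg, fromBlocks_inj] at hskew'
    obtain ⟨hs11, hs21, hs12, hs22⟩ := hskew'
    obtain ⟨R, ⟨hR, hRM⟩, hRu⟩ := ih M' hs11 hmin'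
    have hdetRJ : IsUnit (Rᵀ * hatJ k).det := by
      rw [← hRM, det_mul] at hdet'
      exact (left_ne_zero_of_mul hdet').isUnit
    obtain ⟨Y, hY⟩ : ∃ Y, Y = (Rᵀ * hatJ k)⁻¹ * B := ⟨_, rfl⟩
    have hYB : Rᵀ * hatJ k * Y = B := by
      rw [hY, mul_nonsing_inv_cancel_left _ _ hdetRJ]
    have hYB' : Yᵀ * hatJ k * R = B' := by
      have h := congrArg transpose hYB
      rw [transpose_mul, transpose_mul, transpose_transpose, hatJ_transpose, hs12] at h
      simpa [Matrix.mul_assoc] using h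
    have hE : (C - Yᵀ * hatJ k * Y)ᵀ = -(C - Yᵀ * hatJ k * Y) := by
      rw [transpose_sub, hs22, transpose_mul, transpose_mul, transpose_transpose, hatJ_transpose]
      simp only [Matrix.neg_mul, Matrix.mul_neg, Matrix.mul_assoc]
      abel
    have hE' := skew_two _ hE
    set c := (C - Yᵀ * hatJ k * Y) 0 1 with hc
    -- If `c = 0`, then `C = Yᵀ Ĵ Y`, so `M` factors through the singular matrix `[[R, Y], [0, 0]]`.
    have hc0 : c ≠ 0 := by
      intro h0
      apply hdetM
      rw [h0, zero_smul, sub_eq_zero] at hE'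
      have h := fromBlocks_congr R (hatJ k) Y 0 J₂
      rw [hRM, hYB, hYB', ← hE'] at h
      simp only [Matrix.mul_zero, add_zero] at h
      rw [← h, det_mul, det_fromBlocks_zero₂₁]
      simp
    obtain ⟨a, b, ⟨ha, hb, hab⟩, hu⟩ := existsUnique_diag c hc0
    refine ⟨(fromBlocks R Y 0 !![a, 0; 0, b]).submatrix e.symm e.symm, ⟨?_, ?_⟩, ?_⟩
    · rw [isHatT0_succ]
      exact ⟨hR, rfl, rfl, rfl, ha, hb⟩
    · rw [heq, fromBlocks_congr, diag_congr_J₂ _ rfl rfl, hRM, hYB, hYB']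
      have : (!![a, 0; 0, b] 0 0 * !![a, 0; 0, b] 1 1 : ℝ) = c := hab
      rw [this, ← hE', add_sub_cancel]
    · rintro T ⟨hT, hTM⟩
      obtain ⟨R₁, Y₁, Z₁, D₁, rfl⟩ : ∃ R₁ Y₁ Z₁ D₁,
          T = (fromBlocks R₁ Y₁ Z₁ D₁).submatrix e.symm e.symm :=
        ⟨_, _, _, _, by rw [fromBlocks_toBlocks (T.submatrix e e)]; simp⟩
      rw [isHatT0_succ] at hT
      obtain ⟨hR₁, rfl, h10, h01, hpos, habs⟩ := hT
      rw [heq, fromBlocks_congr, fromBlocks_inj, diag_congr_J₂ _ h10 h01] at hTM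
      obtain ⟨h11, h12, -, h22⟩ := hTM
      obtain rfl : R₁ = R := hRu R₁ ⟨hR₁, h11⟩
      obtain rfl : Y₁ = Y := by
        rw [hY, ← h12, nonsing_inv_mul_cancel_left _ _ hdetRJ]
      have hprod : D₁ 0 0 * D₁ 1 1 = c := by
        rw [hc, ← h22]
        simp [J₂]
      obtain ⟨h0, h1⟩ := hu _ _ hpos habs hprod
      congr 2
      ext i j
      fin_cases i <;> fin_cases j <;> simp [h10, h01, h0, h1]

/-! ### The perfect shuffle -/

lemma shuffleIdx_injective (k : ℕ) : Function.Injective (shuffleIdx k) := by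
  intro i j h
  have h' := congrArg Fin.val h
  unfold shuffleIdx at h'
  ext
  split_ifs at h' <;> simp only at h' <;> omega

lemma shuffleP_congr (k : ℕ) (N : Matrix (Fin (2 * k)) (Fin (2 * k)) ℝ) :
    (shuffleP k)ᵀ * N * shuffleP k = N.submatrix (shuffleIdx k) (shuffleIdx k) := by
  ext i j
  simp [shuffleP, Matrix.mul_apply]

lemma shuffleP_transpose_mul (k : ℕ) : (shuffleP k)ᵀ * shuffleP k = 1 := by
  have h := shuffleP_congr k 1
  rwa [Matrix.mul_one, submatrix_one _ (shuffleIdx_injective k)] at h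

lemma shuffleP_mul_transpose (k : ℕ) : shuffleP k * (shuffleP k)ᵀ = 1 :=
  mul_eq_one_comm.1 (shuffleP_transpose_mul k)

lemma shuffleP_hatJ (k : ℕ) : (shuffleP k)ᵀ * hatJ k * shuffleP k = PoissonJ k := by
  rw [shuffleP_congr]
  ext i j
  have hi := i.isLt
  have hj := j.isLt
  simp only [hatJ, hatEntry, PoissonJ, submatrix_apply, of_apply, shuffleIdx]
  congr 1
  · split_ifs <;> simp only [eq_iff_iff] <;> omega
  · congr 1
    split_ifs <;> simp only [eq_iff_iff] <;> omega

lemma PoissonJ_transpose (n : ℕ) : (PoissonJ n)ᵀ = -PoissonJ n := by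
  ext i j
  have hi := i.isLt
  have hj := j.isLt
  simp only [PoissonJ, transpose_apply, Matrix.neg_apply, of_apply]
  split_ifs <;> first | omega | simp

/-- For `R = Pᵀ R̂ P`, the equation `Rᵀ J R = G` is `R̂ᵀ (hatJ k) R̂ = P G Pᵀ`. -/
lemma shuffle_congr_iff (k : ℕ) (Rhat G : Matrix (Fin (2 * k)) (Fin (2 * k)) ℝ) :
    ((shuffleP k)ᵀ * Rhat * shuffleP k)ᵀ * PoissonJ k * ((shuffleP k)ᵀ * Rhat * shuffleP k) = G ↔
      Rhatᵀ * hatJ k * Rhat = shuffleP k * G * (shuffleP k)ᵀ := by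
  have h1 := shuffleP_mul_transpose k
  have h2 := shuffleP_transpose_mul k
  rw [← shuffleP_hatJ]
  generalize shuffleP k = P at *
  have h1' : ∀ X, P * (Pᵀ * X) = X := fun X => by rw [← Matrix.mul_assoc, h1, Matrix.one_mul]
  have h2' : ∀ X, Pᵀ * (P * X) = X := fun X => by rw [← Matrix.mul_assoc, h2, Matrix.one_mul]
  simp only [transpose_mul, transpose_transpose, Matrix.mul_assoc, h1']
  constructor
  · rintro rfl
    simp only [Matrix.mul_assoc, h1', h1, Matrix.mul_one]
  · intro h
    have h3 := congrArg (fun X => Pᵀ * X * P) h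
    simpa only [Matrix.mul_assoc, h2', h2, Matrix.mul_one] using h3

/-! ### The SR decomposition -/

/-- **Theorem (unique SR decomposition with second factor in `T⁰_{2k}(P_{2k})`).**
Let `A ∈ ℝ^{2n×2k}` be such that all leading principal minors of even dimension of
`P_{2k} Aᵀ J_{2n} A P_{2k}ᵀ` are nonzero. Then there exist a unique `S ∈ Sp(2k,2n)` and a
unique `R ∈ T⁰_{2k}(P_{2k})` such that `A = S R`. -/
theorem sr_decomposition_T0_existsUnique
    (k n : ℕ)
    (A : Matrix (Fin (2 * n)) (Fin (2 * k)) ℝ)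
    (hminors : ∀ j : ℕ, 1 ≤ j → ∀ hjk : j ≤ k,
      (leadSub (shuffleP k * (Aᵀ * PoissonJ n * A) * (shuffleP k)ᵀ) (2 * j)
        (by omega)).det ≠ 0) :
    ∃! SR : Matrix (Fin (2 * n)) (Fin (2 * k)) ℝ × Matrix (Fin (2 * k)) (Fin (2 * k)) ℝ,
      SR.1 ∈ SpStiefel k n ∧ SR.2 ∈ Tset0 k ∧ A = SR.1 * SR.2 := by
  set G := Aᵀ * PoissonJ n * A with hG
  set M := shuffleP k * G * (shuffleP k)ᵀ with hM
  have hGskew : Gᵀ = -G := by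
    rw [hG, transpose_mul, transpose_mul, transpose_transpose, PoissonJ_transpose]
    simp [Matrix.mul_assoc]
  have hskew : Mᵀ = -M := by
    rw [hM, transpose_mul, transpose_mul, transpose_transpose, hGskew]
    simp [Matrix.mul_assoc]
  have hmin : ∀ (j : ℕ) (hj : 2 * j ≤ 2 * k), (leadSub M (2 * j) hj).det ≠ 0 := by
    intro j hjk
    rcases Nat.eq_zero_or_pos j with rfl | hj
    · exact (det_isEmpty (A := leadSub M 0 (Nat.zero_le _))).trans_ne one_ne_zero
    · exact hminors j hj (by omega)
  have hdetM : M.det ≠ 0 := hmin k le_rfl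
  have hdetG : G.det ≠ 0 := by
    rw [hM, det_mul, det_mul] at hdetM
    exact right_ne_zero_of_mul (left_ne_zero_of_mul hdetM)
  obtain ⟨Rhat, ⟨hRhat, hRM⟩, hu⟩ := existsUnique_skew_cholesky k M hskew hmin
  set R := (shuffleP k)ᵀ * Rhat * shuffleP k with hR
  have hRG : Rᵀ * PoissonJ k * R = G := (shuffle_congr_iff k Rhat G).2 hRM
  have hdetR : IsUnit R.det := by
    rw [← hRG, det_mul] at hdetG
    exact (right_ne_zero_of_mul hdetG).isUnit
  have hdetRt : IsUnit (Rᵀ).det := by rwa [det_transpose]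
  refine ⟨(A * R⁻¹, R), ⟨?_, ⟨Rhat, hRhat.1, hRhat.2, hR⟩, ?_⟩, ?_⟩
  · have h : (A * R⁻¹)ᵀ * PoissonJ n * (A * R⁻¹) = (Rᵀ)⁻¹ * G * R⁻¹ := by
      rw [hG, transpose_mul, transpose_nonsing_inv]
      simp only [Matrix.mul_assoc]
    change (A * R⁻¹)ᵀ * PoissonJ n * (A * R⁻¹) = PoissonJ k
    rw [h, ← hRG, Matrix.mul_assoc Rᵀ, nonsing_inv_mul_cancel_left _ _ hdetRt,
      mul_nonsing_inv_cancel_right _ _ hdetR]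
  · exact (nonsing_inv_mul_cancel_right _ _ hdetR).symm
  · rintro ⟨S, T⟩ ⟨hS, ⟨That, hup, hd, hT⟩, hA⟩
    simp only at hS hT hA
    have hTG : Tᵀ * PoissonJ k * T = G := by
      rw [hG, hA, ← (show Sᵀ * PoissonJ n * S = PoissonJ k from hS), transpose_mul]
      simp only [Matrix.mul_assoc]
    rw [hT, shuffle_congr_iff] at hTG
    obtain rfl : That = Rhat := hu That ⟨⟨hup, hd⟩, hTG⟩
    obtain rfl : T = R := hT
    rw [hA, mul_nonsing_inv_cancel_right _ _ hdetR]
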